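/- arXiv:2104.04428 — 2 statements merged into one kernel-verified Lean document; each statement's English description precedes it below -/
import Mathlib

section
/- Let K be a field, R = K[x] a polynomial ring in one variable, and G a finite group acting linearly and faithfully on R. Let S = K[x, y] and let I_G = ⋂_{g ∈ G} (y - g(x)) be the Derksen ideal. Then I_G^{(n)} = I_G^n for every n ≥ 1; equivalently, ⋂_{g ∈ G} (y - g(x))^n = (⋂_{g ∈ G} (y - g(x)))^n for every n ≥ 1. -/
/-!
In one variable each component `(y - g(x))` is principal. An intersection of principal ideals in a
unique factorization domain is stable under greatest common divisors, hence generated by any of its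
elements that is minimal for divisibility; so the Derksen ideal is `(f)` for some `f`.

In a Noetherian ring `I^{(1)} = I`, because the annihilator of a nonzero element of `A ⧸ I` is
contained in an associated prime. So for `f ≠ 0` an element of `(f)^{(n+1)} ⊆ (f)^{(1)} = (f)` has
the form `f * b`, and cancelling `f` leaves `b ∈ (f)^{(n)}`, which is `(f)^n` by induction.
-/

open MvPolynomial

/-- The `n`-th symbolic power of an ideal `I`:
`I^{(n)} = ⋂_{p ∈ Ass(A/I)} (Iⁿ A_p ∩ A)`. -/
noncomputable def symbolicPower {A : Type*} [CommRing A] (I : Ideal A) (n : ℕ) : Ideal A :=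
  ⨅ (p : Ideal A) (hp : p ∈ associatedPrimes A (A ⧸ I)),
    haveI : p.IsPrime := hp.isPrime
    Ideal.comap (algebraMap A (Localization.AtPrime p))
      (Ideal.map (algebraMap A (Localization.AtPrime p)) (I ^ n))

/-- The component `(y₁ - g(x₁), …, y_d - g(x_d))` of the Derksen ideal, in
`S = K[x₁, …, x_d, y₁, …, y_d]`, where the `x`-variables are indexed by `Sum.inl`
and the `y`-variables by `Sum.inr`. -/
noncomputable def derksenComponent (K : Type*) [Field K] (d : ℕ) {G : Type*} [Group G]
    [MulSemiringAction G (MvPolynomial (Fin d) K)] (g : G) :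
    Ideal (MvPolynomial (Fin d ⊕ Fin d) K) :=
  Ideal.span (Set.range fun i : Fin d =>
    X (Sum.inr i) - rename Sum.inl (g • (X i : MvPolynomial (Fin d) K)))

/-- The Derksen ideal `I_G = ⋂_{g ∈ G} (y₁ - g(x₁), …, y_d - g(x_d))`. -/
noncomputable def derksenIdeal (K : Type*) [Field K] (d : ℕ) (G : Type*) [Group G]
    [MulSemiringAction G (MvPolynomial (Fin d) K)] :
    Ideal (MvPolynomial (Fin d ⊕ Fin d) K) :=
  ⨅ g : G, derksenComponent K d g

section SymbolicPower

variable {A : Type*} [CommRing A]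

theorem mem_symbolicPower_iff {I : Ideal A} {n : ℕ} {a : A} :
    a ∈ symbolicPower I n ↔ ∀ p ∈ associatedPrimes A (A ⧸ I), ∃ s ∉ p, s * a ∈ I ^ n := by
  simp only [symbolicPower, Ideal.mem_iInf, Ideal.mem_comap]
  refine forall₂_congr fun p hp => ?_
  have : p.IsPrime := hp.isPrime
  exact IsLocalization.algebraMap_mem_map_algebraMap_iff p.primeCompl _ _ _

theorem pow_le_symbolicPower (I : Ideal A) (n : ℕ) : I ^ n ≤ symbolicPower I n :=
  le_iInf₂ fun _ _ => Ideal.le_comap_map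

theorem symbolicPower_antitone (I : Ideal A) : Antitone (symbolicPower I) :=
  fun _ _ hmn =>
    iInf₂_mono fun _ _ => Ideal.comap_mono (Ideal.map_mono (Ideal.pow_le_pow_right hmn))

theorem symbolicPower_one [IsNoetherianRing A] (I : Ideal A) : symbolicPower I 1 = I := by
  refine le_antisymm (fun a ha => ?_) (by simpa using pow_le_symbolicPower I 1)
  by_contra haI
  have mk_ne_zero : Ideal.Quotient.mk I a ≠ 0 := by rwa [Ne, Ideal.Quotient.eq_zero_iff_mem]
  obtain ⟨p, hp, annihilator_le⟩ := exists_le_isAssociatedPrime_of_isNoetherianRing A _ mk_ne_zero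
  obtain ⟨s, hsp, hsa⟩ := mem_symbolicPower_iff.mp ha p hp
  have smul_eq_zero : s • Ideal.Quotient.mk I a = 0 :=
    Ideal.Quotient.eq_zero_iff_mem.mpr (by rwa [pow_one] at hsa)
  exact hsp (annihilator_le (by rwa [Submodule.mem_colon_singleton, Submodule.mem_bot]))

theorem symbolicPower_bot [IsNoetherianRing A] (n : ℕ) :
    symbolicPower (⊥ : Ideal A) n = ⊥ ^ n := by
  refine le_antisymm ?_ (pow_le_symbolicPower ⊥ n)
  rcases n with _ | n
  · simp
  · calc symbolicPower (⊥ : Ideal A) (n + 1)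
      _ ≤ symbolicPower ⊥ 1 := symbolicPower_antitone ⊥ (Nat.le_add_left 1 n)
      _ = ⊥ := symbolicPower_one ⊥
      _ ≤ ⊥ ^ (n + 1) := bot_le

theorem mul_mem_symbolicPower_span_singleton_succ_iff {f : A} (hf : f ∈ nonZeroDivisors A)
    {n : ℕ} {b : A} :
    f * b ∈ symbolicPower (Ideal.span {f}) (n + 1) ↔ b ∈ symbolicPower (Ideal.span {f}) n := by
  have cancel (s : A) : s * (f * b) ∈ Ideal.span {f} ^ (n + 1) ↔ s * b ∈ Ideal.span {f} ^ n := by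
    rw [Ideal.span_singleton_pow, Ideal.span_singleton_pow, Ideal.mem_span_singleton,
      Ideal.mem_span_singleton, mul_left_comm, pow_succ', dvd_cancel_left_mem_nonZeroDivisors hf]
  simp only [mem_symbolicPower_iff, cancel]

theorem symbolicPower_span_singleton_of_mem_nonZeroDivisors [IsNoetherianRing A] {f : A}
    (hf : f ∈ nonZeroDivisors A) (n : ℕ) :
    symbolicPower (Ideal.span {f}) n = Ideal.span {f} ^ n := by
  refine le_antisymm ?_ (pow_le_symbolicPower _ n)
  induction n with
  | zero => simp
  | succ n ih =>
    intro a ha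
    have mem_span : a ∈ Ideal.span {f} := by
      simpa only [symbolicPower_one] using symbolicPower_antitone _ (Nat.le_add_left 1 n) ha
    obtain ⟨b, rfl⟩ := Ideal.mem_span_singleton.mp mem_span
    have hb : b ∈ Ideal.span {f} ^ n :=
      ih ((mul_mem_symbolicPower_span_singleton_succ_iff hf).mp ha)
    rw [pow_succ']
    exact Ideal.mul_mem_mul (Ideal.mem_span_singleton_self f) hb

theorem symbolicPower_eq_pow_of_isPrincipal [IsDomain A] [IsNoetherianRing A] (I : Ideal A)
    [I.IsPrincipal] (n : ℕ) : symbolicPower I n = I ^ n := by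
  obtain ⟨f, rfl⟩ := Submodule.IsPrincipal.principal I
  rcases eq_or_ne f 0 with rfl | hf
  · rw [Submodule.span_zero_singleton, symbolicPower_bot]
  · exact symbolicPower_span_singleton_of_mem_nonZeroDivisors (mem_nonZeroDivisors_of_ne_zero hf) n

end SymbolicPower

section PrincipalIdeals

variable {A : Type*} [CommSemiring A]

theorem isPrincipal_of_forall_gcd_mem [GCDMonoid A] [WfDvdMonoid A] {I : Ideal A}
    (hI : ∀ a ∈ I, ∀ b ∈ I, gcd a b ∈ I) : I.IsPrincipal := by
  obtain ⟨a, ha, minimal⟩ := wellFounded_dvdNotUnit.has_min (I : Set A) ⟨0, I.zero_mem⟩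
  refine ⟨a, le_antisymm (fun b hb => ?_) ((Ideal.span_singleton_le_iff_mem I).mpr ha)⟩
  have dvd_gcd : a ∣ gcd a b := by
    by_contra not_dvd
    exact minimal _ (hI a ha b hb) (dvdNotUnit_of_dvd_of_not_dvd (gcd_dvd_left a b) not_dvd)
  exact Ideal.mem_span_singleton.mpr (dvd_gcd.trans (gcd_dvd_right a b))

theorem isPrincipal_iInf [UniqueFactorizationMonoid A] {ι : Sort*} (I : ι → Ideal A)
    [∀ i, (I i).IsPrincipal] : (⨅ i, I i).IsPrincipal := by
  let _ : GCDMonoid A := UniqueFactorizationMonoid.toGCDMonoid A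
  refine isPrincipal_of_forall_gcd_mem fun a ha b hb => ?_
  rw [Ideal.mem_iInf] at ha hb ⊢
  intro i
  have mem_iff (c : A) : c ∈ I i ↔ Submodule.IsPrincipal.generator (I i) ∣ c :=
    Submodule.IsPrincipal.mem_iff_generator_dvd (I i)
  exact (mem_iff _).mpr (dvd_gcd ((mem_iff a).mp (ha i)) ((mem_iff b).mp (hb i)))

end PrincipalIdeals

section DerksenIdeal

variable (K : Type*) [Field K] {G : Type*} [Group G] [MulSemiringAction G (MvPolynomial (Fin 1) K)]

instance isPrincipal_derksenComponent_one (g : G) : (derksenComponent K 1 g).IsPrincipal := by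
  rw [derksenComponent, Set.range_unique]
  exact ⟨_, rfl⟩

variable (G) in
instance isPrincipal_derksenIdeal_one : (derksenIdeal K 1 G).IsPrincipal :=
  isPrincipal_iInf _

end DerksenIdeal

theorem symbolicPower_derksenIdeal_dim_one_general {K : Type*} [Field K] (G : Type*) [Group G]
    [MulSemiringAction G (MvPolynomial (Fin 1) K)] (n : ℕ) :
    symbolicPower (derksenIdeal K 1 G) n = derksenIdeal K 1 G ^ n :=
  symbolicPower_eq_pow_of_isPrincipal _ n

/-- For a finite group acting linearly and faithfully on `K[x]`, the symbolic powers of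
the Derksen ideal coincide with its ordinary powers. -/
theorem symbolicPower_derksenIdeal_dim_one {K : Type*} [Field K] (G : Type*)
    [Group G] [Finite G] [MulSemiringAction G (MvPolynomial (Fin 1) K)]
    (hC : ∀ (g : G) (a : K), g • (C a : MvPolynomial (Fin 1) K) = C a)
    (hlin : ∀ (g : G) (i : Fin 1), (g • (X i : MvPolynomial (Fin 1) K)).IsHomogeneous 1)
    (hfaith : ∀ g h : G, g ≠ h →
      g • (X 0 : MvPolynomial (Fin 1) K) ≠ h • (X 0 : MvPolynomial (Fin 1) K))
    (n : ℕ) (hn : 1 ≤ n) :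
    symbolicPower (derksenIdeal K 1 G) n = derksenIdeal K 1 G ^ n :=
  symbolicPower_derksenIdeal_dim_one_general G n
end

section
/- Let K be an algebraically closed field, R = K[x_1, ..., x_d] with a linear action of G = ⟨g_1, ..., g_a⟩, a ≤ d, given by g_i(x_j) = x_j for j ≠ i and g_i(x_i) = ω_i x_i, where ω_i ∈ K is a primitive d_i-th root of unity with d_i ≥ 1. Then in S = K[x_1, ..., x_d, y_1, ..., y_d] the Derksen ideal satisfies I_G = (y_1^{d_1} − x_1^{d_1}, ..., y_a^{d_a} − x_a^{d_a}, y_{a+1} − x_{a+1}, ..., y_d − x_d); in particular, I_G is generated by a regular sequence. -/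
/-!
The component of the Derksen ideal at `g` is the ideal of the graph `y = g(x)`. When the tuples
`(g(x_1), …, g(x_d))`, `g ∈ G`, form a grid `S_1 × ⋯ × S_d` of polynomials in `x`, the Combinatorial
Nullstellensatz says that the intersection of these graph ideals is generated by the polynomials
`p_i = ∏_{r ∈ S_i} (y_i - r)`. Applied to a subset `T` of the indices, with the remaining `y_i`
treated as constants, it says that the ideal `(p_j : j ∈ T)` consists of the polynomials killed by
all substitutions of the `y_j`, `j ∈ T`, by grid points. For `i ∉ T` such a substitution fixes
`p_i ≠ 0`, so `p_i` is a nonzerodivisor modulo `(p_j : j ∈ T)`.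

For the diagonal action, `S_i` is the set of `d_i`-th roots of `x_i ^ d_i`: these monomials are
invariant under `G`, and their roots `ω_i ^ k x_i` can be attained in all coordinates
independently. The indices `i > a` are covered by putting `g_i = 1`, `ω_i = 1`, `d_i = 1`.
-/

open MvPolynomial

section Grid

lemma eval_mem_span_range_prod_sub {σ A : Type*} [Finite σ] [CommRing A] [IsDomain A]
    (S : σ → Finset A) (f : MvPolynomial σ A)
    (hf : ∀ s : σ → A, (∀ i, s i ∈ S i) → eval s f = 0) (b : σ → A) :
    eval b f ∈ Ideal.span (Set.range fun i => ∏ r ∈ S i, (b i - r)) := by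
  by_cases hS : ∀ i, (S i).Nonempty
  · obtain ⟨h, -, hfh⟩ := combinatorial_nullstellensatz_exists_linearCombination S hS f hf
    rw [hfh, Finsupp.linearCombination_apply, Finsupp.sum, map_sum]
    refine Ideal.sum_mem _ fun i _ => ?_
    rw [smul_eq_mul, map_mul, map_prod]
    exact Ideal.mul_mem_left _ _ (Ideal.subset_span ⟨i, by simp⟩)
  · obtain ⟨i, hi⟩ := not_forall.1 hS
    have htop : Ideal.span (Set.range fun i => ∏ r ∈ S i, (b i - r)) = ⊤ :=
      (Ideal.eq_top_iff_one _).2 <|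
        Ideal.subset_span ⟨i, by simp [Finset.not_nonempty_iff_eq_empty.1 hi]⟩
    exact htop ▸ Submodule.mem_top

variable {τ ι R : Type*} [CommRing R]

/-- The ideal of the graph `y = s(x)` in `R[x, y]`, where the `x`-variables are indexed by `Sum.inl`
and the `y`-variables by `Sum.inr`. -/
noncomputable def graphIdeal (s : ι → MvPolynomial τ R) : Ideal (MvPolynomial (τ ⊕ ι) R) :=
  Ideal.span (Set.range fun i => X (Sum.inr i) - rename Sum.inl (s i))

/-- The monic polynomial in `y_i` over `R[x]` whose roots are the `i`-th side `S i` of a grid of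
polynomials in `x`. -/
noncomputable def gridPoly (S : ι → Finset (MvPolynomial τ R)) (i : ι) :
    MvPolynomial (τ ⊕ ι) R :=
  ∏ r ∈ S i, (X (Sum.inr i) - rename Sum.inl r)

/-- The substitution `y_i ↦ s i` on `R[x, y]`. The values may involve `y`, so that some of the
`y_i` can be left in place. -/
noncomputable def substY (s : ι → MvPolynomial (τ ⊕ ι) R) :
    MvPolynomial (τ ⊕ ι) R →ₐ[R] MvPolynomial (τ ⊕ ι) R :=
  bind₁ (Sum.elim (fun k => X (Sum.inl k)) s)

@[simp]
lemma substY_X_inr (s : ι → MvPolynomial (τ ⊕ ι) R) (i : ι) : substY s (X (Sum.inr i)) = s i := by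
  simp [substY]

@[simp]
lemma substY_rename_inl (s : ι → MvPolynomial (τ ⊕ ι) R) (r : MvPolynomial τ R) :
    substY s (rename Sum.inl r) = rename Sum.inl r := by
  have hcomp : (substY s).comp (rename Sum.inl) = (rename Sum.inl : MvPolynomial τ R →ₐ[R] _) :=
    algHom_ext fun k => by simp [substY]
  exact DFunLike.congr_fun hcomp r

lemma substY_gridPoly (S : ι → Finset (MvPolynomial τ R)) (s : ι → MvPolynomial (τ ⊕ ι) R)
    (i : ι) : substY s (gridPoly S i) = ∏ r ∈ S i, (s i - rename Sum.inl r) := by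
  simp [gridPoly]

lemma substY_gridPoly_eq_zero {S : ι → Finset (MvPolynomial τ R)}
    {s : ι → MvPolynomial (τ ⊕ ι) R} {i : ι} (hs : ∃ r ∈ S i, rename Sum.inl r = s i) :
    substY s (gridPoly S i) = 0 := by
  obtain ⟨r, hr, hrs⟩ := hs
  rw [substY_gridPoly]
  exact Finset.prod_eq_zero hr (by rw [hrs, sub_self])

lemma graphIdeal_le_ker_substY (s : ι → MvPolynomial τ R) :
    graphIdeal s ≤ RingHom.ker (substY fun i => rename Sum.inl (s i)) := by
  rw [graphIdeal, Ideal.span_le]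
  rintro _ ⟨i, rfl⟩
  simp

lemma gridPoly_mem_graphIdeal {S : ι → Finset (MvPolynomial τ R)} {s : ι → MvPolynomial τ R}
    {i : ι} (hs : s i ∈ S i) : gridPoly S i ∈ graphIdeal s :=
  Ideal.mem_of_dvd _ (Finset.dvd_prod_of_mem _ hs) (Ideal.subset_span ⟨i, rfl⟩)

variable [IsDomain R]

lemma gridPoly_ne_zero (S : ι → Finset (MvPolynomial τ R)) (i : ι) : gridPoly S i ≠ 0 := by
  refine Finset.prod_ne_zero_iff.2 fun r _ hr => ?_
  have hr' (s : ι → MvPolynomial (τ ⊕ ι) R) : s i = rename Sum.inl r := by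
    simpa [sub_eq_zero] using congrArg (substY s) hr
  exact zero_ne_one ((hr' 0).trans (hr' 1).symm)

variable [Finite τ] [Finite ι]

lemma mem_span_image_gridPoly {S : ι → Finset (MvPolynomial τ R)} {T : Set ι}
    {f : MvPolynomial (τ ⊕ ι) R}
    (hf : ∀ s : ι → MvPolynomial (τ ⊕ ι) R, (∀ i ∈ T, ∃ r ∈ S i, rename Sum.inl r = s i) →
      (∀ i ∉ T, s i = X (Sum.inr i)) → substY s f = 0) :
    f ∈ Ideal.span (gridPoly S '' T) := by
  classical
  let nodes : τ ⊕ ι → Finset (MvPolynomial (τ ⊕ ι) R) :=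
    Sum.elim (fun k => {X (Sum.inl k)})
      fun i => if i ∈ T then (S i).image (rename Sum.inl) else {X (Sum.inr i)}
  have hnodes (s : τ ⊕ ι → MvPolynomial (τ ⊕ ι) R) (hs : ∀ v, s v ∈ nodes v) :
      eval s (map C f) = 0 := by
    have hinl : s ∘ Sum.inl = fun k => X (Sum.inl k) :=
      funext fun k => by simpa [nodes] using hs (Sum.inl k)
    rw [eval_map, ← hf (s ∘ Sum.inr) (fun i hi => by simpa [nodes, hi] using hs (Sum.inr i))
      fun i hi => by simpa [nodes, hi] using hs (Sum.inr i), substY, ← hinl, Sum.elim_comp_inl_inr]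
    rfl
  have hmem := eval_mem_span_range_prod_sub nodes (map C f) hnodes X
  rw [eval_map, eval₂_eta] at hmem
  refine Ideal.span_le.2 ?_ hmem
  rintro _ ⟨k | i, rfl⟩
  · simp [nodes]
  · by_cases hi : i ∈ T
    · refine Ideal.subset_span ⟨i, hi, ?_⟩
      simp [nodes, hi, gridPoly, (rename_injective _ Sum.inl_injective).eq_iff]
    · simp [nodes, hi]

theorem iInf_graphIdeal_eq_span_range_gridPoly (S : ι → Finset (MvPolynomial τ R)) :
    ⨅ s ∈ {s : ι → MvPolynomial τ R | ∀ i, s i ∈ S i}, graphIdeal s =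
      Ideal.span (Set.range (gridPoly S)) := by
  refine le_antisymm (fun f hf => ?_) (le_iInf₂ fun s hs => Ideal.span_le.2 ?_)
  · rw [← Set.image_univ]
    refine mem_span_image_gridPoly fun s hs _ => ?_
    choose r hrS hrs using fun i => hs i (Set.mem_univ i)
    obtain rfl : (fun i => rename Sum.inl (r i)) = s := funext hrs
    exact graphIdeal_le_ker_substY r ((Ideal.mem_iInf.1 ((Ideal.mem_iInf.1 hf) r)) hrS)
  · rintro _ ⟨i, rfl⟩
    exact gridPoly_mem_graphIdeal (hs i)

lemma mem_span_image_gridPoly_of_mul_mem {S : ι → Finset (MvPolynomial τ R)} {T : Set ι} {i : ι}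
    (hi : i ∉ T) {f : MvPolynomial (τ ⊕ ι) R}
    (hf : gridPoly S i * f ∈ Ideal.span (gridPoly S '' T)) :
    f ∈ Ideal.span (gridPoly S '' T) := by
  refine mem_span_image_gridPoly fun s hsT hsT' => ?_
  have hker : Ideal.span (gridPoly S '' T) ≤ RingHom.ker (substY s) := by
    rw [Ideal.span_le]
    rintro _ ⟨j, hj, rfl⟩
    exact substY_gridPoly_eq_zero (hsT j hj)
  have hfix : substY s (gridPoly S i) = gridPoly S i := by
    rw [substY_gridPoly, hsT' i hi, gridPoly]
  have hzero : gridPoly S i * substY s f = 0 := by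
    simpa [hfix] using RingHom.mem_ker.1 (hker hf)
  exact (mul_eq_zero.1 hzero).resolve_left (gridPoly_ne_zero S i)

end Grid

section RegularSequence

open RingTheory.Sequence

lemma isWeaklyRegular_map_of_nodup {ι A : Type*} [CommRing A] {p : ι → A}
    (hp : ∀ (T : Set ι), ∀ i ∉ T, ∀ f : A,
      p i * f ∈ Ideal.span (p '' T) → f ∈ Ideal.span (p '' T))
    {l : List ι} (hl : l.Nodup) : IsWeaklyRegular A (l.map p) := by
  refine ⟨fun n hn => ?_⟩
  have hspan : Ideal.ofList ((l.map p).take n) = Ideal.span (p '' {i | i ∈ l.take n}) := by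
    rw [Ideal.ofList, ← List.map_take]
    exact congrArg Ideal.span (Set.ext fun x => List.mem_map)
  have hn' : n < l.length := by simpa using hn
  have hnotMem : l[n] ∉ l.take n := fun hmem => by
    obtain ⟨m, hm, hmn⟩ := List.mem_take_iff_getElem.1 hmem
    have := (hl.getElem_inj_iff).1 hmn
    omega
  rw [isSMulRegular_quotient_iff_mem_of_smul_mem, hspan, List.getElem_map]
  simpa only [smul_eq_mul, Ideal.mul_top] using hp _ _ hnotMem

theorem isRegular_map_gridPoly {τ ι R : Type*} [Finite τ] [Finite ι] [CommRing R] [IsDomain R]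
    {S : ι → Finset (MvPolynomial τ R)} (hS : ∀ i, (S i).Nonempty) {l : List ι} (hl : l.Nodup) :
    IsRegular (MvPolynomial (τ ⊕ ι) R) (l.map (gridPoly S)) := by
  refine ⟨isWeaklyRegular_map_of_nodup
    (fun _ _ hi _ => mem_span_image_gridPoly_of_mul_mem hi) hl, fun htop => ?_⟩
  choose s hs using hS
  have hle : Ideal.ofList (l.map (gridPoly S)) ≤
      RingHom.ker (substY fun i => rename Sum.inl (s i)) := by
    rw [Ideal.ofList, Ideal.span_le]
    intro p hp
    obtain ⟨i, -, rfl⟩ := List.mem_map.1 hp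
    exact substY_gridPoly_eq_zero ⟨s i, hs i, rfl⟩
  rw [smul_eq_mul, Ideal.mul_top] at htop
  exact RingHom.ker_ne_top _ (top_le_iff.1 (htop ▸ hle))

end RegularSequence

section Roots

open Polynomial (nthRootsFinset)

lemma prod_nthRootsFinset_X_sub_C {A : Type*} [CommRing A] [IsDomain A] {n : ℕ} {ζ α : A}
    (hζ : IsPrimitiveRoot ζ n) (hn : 0 < n) (hα : α ≠ 0) :
    ∏ r ∈ nthRootsFinset n (α ^ n), (Polynomial.X - Polynomial.C r) =
      Polynomial.X ^ n - Polynomial.C (α ^ n) := by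
  classical
  rw [X_pow_sub_C_eq_prod hζ hn rfl, Polynomial.nthRootsFinset_def,
    Finset.prod_eq_multiset_prod, Multiset.toFinset_val,
    (hζ.nthRoots_nodup (pow_ne_zero n hα)).dedup, hζ.nthRoots_eq rfl, Multiset.map_map]
  rfl

variable {ι R : Type*} [CommRing R] [IsDomain R]

lemma gridPoly_nthRootsFinset {e : ι → ℕ} {i : ι} (he : 0 < e i) {ζ : R}
    (hζ : IsPrimitiveRoot ζ (e i)) :
    gridPoly (fun i => nthRootsFinset (e i) (X i ^ e i : MvPolynomial ι R)) i =
      X (Sum.inr i) ^ e i - X (Sum.inl i) ^ e i := by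
  have hprod := congrArg
    (Polynomial.eval₂ (rename Sum.inl : _ →ₐ[R] MvPolynomial (ι ⊕ ι) R).toRingHom (X (Sum.inr i)))
    (prod_nthRootsFinset_X_sub_C (hζ.map_of_injective (C_injective ι R)) he (X_ne_zero i))
  simpa [Polynomial.eval₂_finsetProd, Polynomial.eval₂_pow, gridPoly] using hprod

theorem isRegular_map_pow_sub_pow [Finite ι] {e : ι → ℕ} (he : ∀ i, 0 < e i) {ζ : ι → R}
    (hζ : ∀ i, IsPrimitiveRoot (ζ i) (e i)) {l : List ι} (hl : l.Nodup) :
    RingTheory.Sequence.IsRegular (MvPolynomial (ι ⊕ ι) R)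
      (l.map fun i => (X (Sum.inr i) ^ e i - X (Sum.inl i) ^ e i : MvPolynomial (ι ⊕ ι) R)) := by
  simp_rw [← fun i => gridPoly_nthRootsFinset (he i) (hζ i)]
  exact isRegular_map_gridPoly
    (fun i => ⟨X i, (Polynomial.mem_nthRootsFinset (he i) _).2 rfl⟩) hl

end Roots

section Action

lemma smul_eq_self_of_closure_eq_top {G α : Type*} [Group G] [MulAction G α] {A : Set G}
    (hA : Subgroup.closure A = ⊤) {x : α} (hx : ∀ g ∈ A, g • x = x) (g : G) : g • x = x :=
  (Subgroup.closure_le (MulAction.stabilizer G x)).2 hx (hA ▸ Subgroup.mem_top g)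

variable {ι R G : Type*} [CommRing R] [Group G] [MulSemiringAction G (MvPolynomial ι R)]

/-- The submonoid of those `c` for which the scaling `x_j ↦ c_j x_j` of the variables is the action
of some element of `G`. -/
def diagonalScalings (hC : ∀ (g : G) (c : R), g • (C c : MvPolynomial ι R) = C c) :
    Submonoid (ι → R) where
  carrier := {c | ∃ g : G, ∀ j, g • (X j : MvPolynomial ι R) = C (c j) * X j}
  one_mem' := ⟨1, by simp⟩
  mul_mem' := by
    rintro c c' ⟨g, hg⟩ ⟨h, hh⟩
    refine ⟨g * h, fun j => ?_⟩
    rw [mul_smul, hh, smul_mul', hC, hg, Pi.mul_apply, map_mul]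
    ring

lemma exists_smul_X_eq_iff_pow_eq [IsDomain R] [Finite ι] [DecidableEq ι]
    {hC : ∀ (g : G) (c : R), g • (C c : MvPolynomial ι R) = C c}
    {e : ι → ℕ} (he : ∀ i, 0 < e i) {ζ : ι → R} (hζ : ∀ i, IsPrimitiveRoot (ζ i) (e i))
    (hscale : ∀ i, Pi.mulSingle i (ζ i) ∈ diagonalScalings hC)
    (hinv : ∀ (g : G) i, g • (X i ^ e i : MvPolynomial ι R) = X i ^ e i)
    (s : ι → MvPolynomial ι R) :
    (∃ g : G, (fun i => g • X i) = s) ↔ ∀ i, s i ^ e i = X i ^ e i := by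
  refine ⟨?_, fun hs => ?_⟩
  · rintro ⟨g, rfl⟩ i
    rw [← smul_pow', hinv]
  · have hroot (i : ι) : ∃ k : ℕ, s i = C (ζ i ^ k) * X i := by
      have hmem := (Polynomial.mem_nthRoots (he i)).2 (hs i)
      rw [((hζ i).map_of_injective (C_injective ι R)).nthRoots_eq rfl, Multiset.mem_map] at hmem
      obtain ⟨k, -, hk⟩ := hmem
      exact ⟨k, by rw [map_pow, hk]⟩
    choose k hk using hroot
    have hmem : (fun i => ζ i ^ k i) ∈ diagonalScalings hC :=
      Submonoid.pi_mem_of_mulSingle_mem _ fun i => by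
        rw [Pi.mulSingle_pow]
        exact pow_mem (hscale i) (k i)
    obtain ⟨g, hg⟩ := hmem
    exact ⟨g, funext fun i => by rw [hg, hk]⟩

end Action

section Derksen

variable {K : Type*} [Field K] {d : ℕ} {G : Type*} [Group G]
  [MulSemiringAction G (MvPolynomial (Fin d) K)]

lemma derksenIdeal_eq_span_range_gridPoly {S : Fin d → Finset (MvPolynomial (Fin d) K)}
    (hS : ∀ s : Fin d → MvPolynomial (Fin d) K,
      (∃ g : G, (fun i => g • X i) = s) ↔ ∀ i, s i ∈ S i) :
    derksenIdeal K d G = Ideal.span (Set.range (gridPoly S)) := by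
  have hgrid : {s | ∀ i, s i ∈ S i} =
      Set.range fun (g : G) i => g • (X i : MvPolynomial (Fin d) K) :=
    Set.ext fun s => (hS s).symm
  rw [← iInf_graphIdeal_eq_span_range_gridPoly, hgrid, iInf_range]
  rfl

theorem derksenIdeal_eq_span_range_pow_sub_pow
    {γ : Fin d → G} (hγ : Subgroup.closure (Set.range γ) = ⊤)
    {e : Fin d → ℕ} (he : ∀ i, 0 < e i) {ζ : Fin d → K} (hζ : ∀ i, IsPrimitiveRoot (ζ i) (e i))
    (hC : ∀ (g : G) (c : K), g • (C c : MvPolynomial (Fin d) K) = C c)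
    (hact : ∀ i j : Fin d, γ i • (X j : MvPolynomial (Fin d) K) =
      C (Pi.mulSingle (M := fun _ => K) i (ζ i) j) * X j) :
    derksenIdeal K d G =
      Ideal.span (Set.range fun i => X (Sum.inr i) ^ e i - X (Sum.inl i) ^ e i) := by
  have hinv (g : G) (j : Fin d) : g • (X j ^ e j : MvPolynomial (Fin d) K) = X j ^ e j := by
    refine smul_eq_self_of_closure_eq_top hγ (Set.forall_mem_range.2 fun i => ?_) g
    have hpow : Pi.mulSingle (M := fun _ => K) i (ζ i) j ^ e j = 1 := by
      obtain rfl | hij := eq_or_ne j i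
      · rw [Pi.mulSingle_eq_same, (hζ j).pow_eq_one]
      · rw [Pi.mulSingle_eq_of_ne hij, one_pow]
    rw [smul_pow', hact, mul_pow, ← map_pow, hpow, map_one, one_mul]
  simp_rw [← fun i => gridPoly_nthRootsFinset (he i) (hζ i)]
  refine derksenIdeal_eq_span_range_gridPoly fun s => ?_
  simpa only [Polynomial.mem_nthRootsFinset (he _)] using
    exists_smul_X_eq_iff_pow_eq (hC := hC) he hζ (fun i => ⟨γ i, hact i⟩) hinv s

theorem derksenIdeal_diagonal_eq_span_general {K : Type*} [Field K]
    (d a : ℕ) (ha : a ≤ d) (G : Type*) [Group G]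
    [MulSemiringAction G (MvPolynomial (Fin d) K)]
    (gen : Fin a → G) (hgen : Subgroup.closure (Set.range gen) = ⊤)
    (di : Fin a → ℕ) (hdi : ∀ i, 1 ≤ di i)
    (ω : Fin a → K) (hω : ∀ i, IsPrimitiveRoot (ω i) (di i))
    (hC : ∀ (g : G) (c : K), g • (C c : MvPolynomial (Fin d) K) = C c)
    (hact : ∀ (i : Fin a) (j : Fin d),
      gen i • (X j : MvPolynomial (Fin d) K) =
        if j = Fin.castLE ha i then C (ω i) * X j else X j)
    (gens : Fin d → MvPolynomial (Fin d ⊕ Fin d) K)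
    (hgens : ∀ i : Fin d, gens i =
      if h : (i : ℕ) < a then
        X (Sum.inr i) ^ di ⟨i, h⟩ - X (Sum.inl i) ^ di ⟨i, h⟩
      else
        X (Sum.inr i) - X (Sum.inl i)) :
    derksenIdeal K d G = Ideal.span (Set.range gens) ∧
      RingTheory.Sequence.IsRegular (MvPolynomial (Fin d ⊕ Fin d) K) (List.ofFn gens) := by
  let γ : Fin d → G := fun i => if h : (i : ℕ) < a then gen ⟨i, h⟩ else 1
  let e : Fin d → ℕ := fun i => if h : (i : ℕ) < a then di ⟨i, h⟩ else 1
  let ζ : Fin d → K := fun i => if h : (i : ℕ) < a then ω ⟨i, h⟩ else 1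
  have hγ : Subgroup.closure (Set.range γ) = ⊤ := by
    refine top_le_iff.1 (hgen ▸ Subgroup.closure_mono ?_)
    rintro _ ⟨i, rfl⟩
    exact ⟨Fin.castLE ha i, by simp [γ]⟩
  have he (i : Fin d) : 0 < e i := by
    dsimp only [e]
    split_ifs with hi
    exacts [hdi _, one_pos]
  have hζ (i : Fin d) : IsPrimitiveRoot (ζ i) (e i) := by
    dsimp only [e, ζ]
    split_ifs with hi
    exacts [hω _, IsPrimitiveRoot.one]
  have hγact (i j : Fin d) : γ i • (X j : MvPolynomial (Fin d) K) =
      C (Pi.mulSingle (M := fun _ => K) i (ζ i) j) * X j := by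
    by_cases hi : (i : ℕ) < a <;> by_cases hij : j = i <;> simp [γ, ζ, hi, hact, hij]
  obtain rfl : gens = fun i => X (Sum.inr i) ^ e i - X (Sum.inl i) ^ e i := by
    funext i
    by_cases hi : (i : ℕ) < a <;> simp [hgens, e, hi]
  refine ⟨derksenIdeal_eq_span_range_pow_sub_pow hγ he hζ hC hγact, ?_⟩
  rw [List.ofFn_eq_map]
  exact isRegular_map_pow_sub_pow he hζ (List.nodup_finRange d)

end Derksen

/-- For the diagonal action of `G = ⟨g₁, …, g_a⟩` on `K[x₁, …, x_d]` over an algebraically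
closed field, the Derksen ideal equals
`(y₁^{d₁} - x₁^{d₁}, …, y_a^{d_a} - x_a^{d_a}, y_{a+1} - x_{a+1}, …, y_d - x_d)`;
in particular it is generated by a regular sequence. -/
theorem derksenIdeal_diagonal_eq_span {K : Type*} [Field K] [IsAlgClosed K]
    (d a : ℕ) (ha : a ≤ d) (G : Type*) [Group G] [Finite G]
    [MulSemiringAction G (MvPolynomial (Fin d) K)]
    (gen : Fin a → G) (hgen : Subgroup.closure (Set.range gen) = ⊤)
    (di : Fin a → ℕ) (hdi : ∀ i, 1 ≤ di i)
    (ω : Fin a → K) (hω : ∀ i, IsPrimitiveRoot (ω i) (di i))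
    (hC : ∀ (g : G) (c : K), g • (C c : MvPolynomial (Fin d) K) = C c)
    (hact : ∀ (i : Fin a) (j : Fin d),
      gen i • (X j : MvPolynomial (Fin d) K) =
        if j = Fin.castLE ha i then C (ω i) * X j else X j)
    (gens : Fin d → MvPolynomial (Fin d ⊕ Fin d) K)
    (hgens : ∀ i : Fin d, gens i =
      if h : (i : ℕ) < a then
        X (Sum.inr i) ^ di ⟨i, h⟩ - X (Sum.inl i) ^ di ⟨i, h⟩
      else
        X (Sum.inr i) - X (Sum.inl i)) :
    derksenIdeal K d G = Ideal.span (Set.range gens) ∧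
      RingTheory.Sequence.IsRegular (MvPolynomial (Fin d ⊕ Fin d) K) (List.ofFn gens) :=
  derksenIdeal_diagonal_eq_span_general d a ha G gen hgen di hdi ω hω hC hact gens hgens
end
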